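/- The quotient group Λ3♯/Λ3 has exactly 32 elements, consisting of: the zero coset; exactly 8 cosets of minimal norm 3/8, each of order 8; exactly 6 cosets of minimal norm 1/2, each of order 4; exactly 6 cosets of minimal norm 1, each of order 2; exactly 8 cosets of minimal norm 11/8, each of order 8; exactly 2 cosets of minimal norm 3/2, each of order 4; and exactly 1 coset of minimal norm 2, of order 2. Here the minimal norm of a coset is the minimum of ‖x‖² over x in the coset. -/

import Mathlib

noncomputable section

open scoped RealInnerProductSpace

/-- `ℝ^n` with the standard inner product. -/
abbrev E (n : ℕ) := EuclideanSpace ℝ (Fin n)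

/-- The standard basis vector `ε i`. -/
def εv {n : ℕ} (i : Fin n) : E n := EuclideanSpace.single i 1

/-- The vector of `ℝ^n` with the given coordinates. -/
def vec {n : ℕ} (x : Fin n → ℝ) : E n := (WithLp.equiv 2 (Fin n → ℝ)).symm x

/-- The vector of `ℝ^n` with the given integer coordinates. -/
def intVec {n : ℕ} (x : Fin n → ℤ) : E n := (WithLp.equiv 2 (Fin n → ℝ)).symm fun i => (x i : ℝ)

/-- A lattice is integral if all pairwise inner products of its elements are integers. -/
def LatticeIsIntegral {n : ℕ} (L : Submodule ℤ (E n)) : Prop :=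
  ∀ x ∈ L, ∀ y ∈ L, ∃ k : ℤ, ⟪x, y⟫ = (k : ℝ)

/-- Two lattices are isometric if a linear isometry of the ambient space carries
one onto the other. -/
def IsometricLattices {n : ℕ} (L M : Submodule ℤ (E n)) : Prop :=
  ∃ g : E n ≃ₗᵢ[ℝ] E n, g '' (L : Set (E n)) = (M : Set (E n))

/-- The laminated lattice `Λ₃ = {√2·x : x ∈ ℤ⁴, x 0 + x 1 + x 2 + x 3 = 0} ≅ √2·A₃`. -/
def Λ3 : Submodule ℤ (E 4) :=
  Submodule.span ℤ
    {v : E 4 | ∃ x : Fin 4 → ℤ, x 0 + x 1 + x 2 + x 3 = 0 ∧ v = Real.sqrt 2 • intVec x}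

/-- The dual lattice of `Λ` inside the hyperplane `V = {x : ∑ i, x i = 0}`:
`Λ♯ = {x ∈ V : ⟪x,y⟫ ∈ ℤ for all y ∈ Λ}`. -/
def dualLatticeIn {n : ℕ} (Λ : Submodule ℤ (E n)) : Submodule ℤ (E n) where
  carrier := {x | (∑ i, x i = 0) ∧ ∀ y ∈ Λ, ∃ k : ℤ, ⟪x, y⟫ = (k : ℝ)}
  zero_mem' := ⟨by simp, fun y _ => ⟨0, by simp⟩⟩
  add_mem' := by
    rintro a b ⟨ha0, ha⟩ ⟨hb0, hb⟩
    refine ⟨?_, ?_⟩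
    · simp only [PiLp.add_apply, Finset.sum_add_distrib, ha0, hb0, add_zero]
    · intro y hy
      obtain ⟨k, hk⟩ := ha y hy
      obtain ⟨l, hl⟩ := hb y hy
      exact ⟨k + l, by rw [inner_add_left, hk, hl]; push_cast; ring⟩
  smul_mem' := by
    rintro c x ⟨hx0, hx⟩
    refine ⟨?_, ?_⟩
    · simp only [PiLp.smul_apply, smul_eq_mul, zsmul_eq_mul, ← Finset.mul_sum, hx0, mul_zero]
    · intro y hy
      obtain ⟨k, hk⟩ := hx y hy
      refine ⟨c * k, ?_⟩
      rw [← Int.cast_smul_eq_zsmul ℝ c x, real_inner_smul_left, hk]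
      push_cast
      ring

/-- The quotient abelian group `Λ♯/Λ`. -/
abbrev DualQuotIn {n : ℕ} (Λ : Submodule ℤ (E n)) :=
  (dualLatticeIn Λ) ⧸ (Λ.comap (dualLatticeIn Λ).subtype)

/-- The coset `c ∈ Λ♯/Λ` has minimal norm `m`, i.e. `m` is the minimum of `‖x‖²`
over `x` in the coset `c`. -/
def CosetMinNormIn {n : ℕ} (Λ : Submodule ℤ (E n)) (c : DualQuotIn Λ) (m : ℝ) : Prop :=
  IsLeast {r : ℝ | ∃ x : dualLatticeIn Λ, Submodule.Quotient.mk x = c ∧ r = ‖(x : E n)‖ ^ 2} m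

/-! The lattice `Λ₃` is the case `N = 2`, `n = 4` of `√N·A_{n-1}`, whose dual is `1/√N` times the
orthogonal projection of `ℤⁿ` to the hyperplane `∑ xᵢ = 0`. If the coordinates of a vector differ
pairwise by at most `√N`, then it is shortest in its coset: for `y ∈ A_{n-1}` and `c` the sum of
the extreme coordinates of `x`, each term of
`‖x + √N y‖² - ‖x‖² = √N ∑ ((2 xᵢ - c) yᵢ + √N yᵢ²)` is nonnegative. Conversely, a coset
representative whose coordinates spread further is shortened by moving `√N` from the larger
coordinate to the smaller one. Hence every coset is represented by the projection of some
`k ∈ {0, …, N}ⁿ`, with minimal norm `(n ∑ kᵢ² - (∑ kᵢ)²) / (nN)`, and two such `k` give the same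
coset iff `n kᵢ - ∑ kⱼ` agree modulo `nN`. For `Λ₃` there remain `3⁴` vectors `k` to inspect. -/

instance decidableAddOrderOfEq {G : Type*} [AddMonoid G] [DecidableEq G] (x : G) (o : ℕ)
    [NeZero o] : Decidable (addOrderOf x = o) :=
  decidable_of_iff _ (addOrderOf_eq_iff (NeZero.pos o)).symm

section Spread

variable {ι R : Type*} [Fintype ι] [CommRing R]

theorem dotProduct_self_add_smul_single_sub_single [DecidableEq ι] (z : ι → R) (a : R) {i j : ι}
    (hij : i ≠ j) :
    (z + a • (Pi.single j 1 - Pi.single i 1)) ⬝ᵥ (z + a • (Pi.single j 1 - Pi.single i 1)) =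
      z ⬝ᵥ z - 2 * a * (z i - z j) + 2 * a ^ 2 := by
  simp only [add_dotProduct, dotProduct_add, smul_dotProduct, dotProduct_smul, sub_dotProduct,
    dotProduct_sub, dotProduct_single, single_dotProduct, Pi.add_apply, Pi.sub_apply,
    Pi.smul_apply, Pi.single_eq_same, Pi.single_eq_of_ne hij, Pi.single_eq_of_ne hij.symm,
    smul_eq_mul]
  ring

theorem exists_sum_eq_zero_and_sub_le {N : ℤ} (hN : 0 < N) (k : ι → ℤ) :
    ∃ y : ι → ℤ, ∑ i, y i = 0 ∧ ∀ i j, (k + N • y) i - (k + N • y) j ≤ N := by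
  classical
  let normSq (y : ι → ℤ) : ℤ := (k + N • y) ⬝ᵥ (k + N • y)
  have normSq_nonneg (y) : 0 ≤ normSq y := Finset.sum_nonneg fun _ _ => mul_self_nonneg _
  obtain ⟨y, hy, hmin⟩ : ∃ y : ι → ℤ, ∑ i, y i = 0 ∧
      ∀ w : ι → ℤ, ∑ i, w i = 0 → normSq y ≤ normSq w := by
    have hne : {y : ι → ℤ | ∑ i, y i = 0}.Nonempty := ⟨0, by simp⟩
    refine ⟨_, Function.argminOn_mem (fun y => (normSq y).toNat) _ hne, fun w hw => ?_⟩
    have := Function.argminOn_le (fun y => (normSq y).toNat) {y | ∑ i, y i = 0} hw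
    have := normSq_nonneg w
    omega
  refine ⟨y, hy, fun i j => ?_⟩
  by_contra! hij
  have hne : i ≠ j := by
    rintro rfl
    omega
  have hle : normSq y ≤ normSq (y + (Pi.single j 1 - Pi.single i 1)) :=
    hmin _ (by simp [Finset.sum_add_distrib, hy])
  simp only [normSq] at hle
  rw [smul_add, ← add_assoc, dotProduct_self_add_smul_single_sub_single _ _ hne] at hle
  nlinarith

variable [LinearOrder R] [IsStrictOrderedRing R]

theorem mul_add_mul_sq_nonneg_of_abs_le {a s : R} (h : |a| ≤ s) (y : ℤ) :
    0 ≤ a * y + s * (y : R) ^ 2 := by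
  have hy : |(y : R)| ≤ (y : R) ^ 2 := by
    exact_mod_cast (Int.natCast_natAbs y).symm.trans_le (Int.natAbs_le_self_sq y)
  have : |a * y| ≤ s * (y : R) ^ 2 := by
    rw [abs_mul]
    exact mul_le_mul h hy (abs_nonneg _) ((abs_nonneg a).trans h)
  linarith [neg_abs_le (a * y)]

theorem sum_sq_le_sum_sq_add_mul {x : ι → R} {s : R} (hx : ∀ i j, x i - x j ≤ s)
    {y : ι → ℤ} (hy : ∑ i, y i = 0) :
    ∑ i, x i ^ 2 ≤ ∑ i, (x i + s * y i) ^ 2 := by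
  cases isEmpty_or_nonempty ι
  · simp
  obtain ⟨p, hp⟩ := Finite.exists_min x
  obtain ⟨q, hq⟩ := Finite.exists_max x
  have hs : 0 ≤ s := by simpa using hx p p
  have term_le (i : ι) : x i ^ 2 + s * (x p + x q) * y i ≤ (x i + s * y i) ^ 2 := by
    have hc : |2 * x i - (x p + x q)| ≤ s :=
      abs_le.2 ⟨by linarith [hp i, hx q i], by linarith [hq i, hx i p]⟩
    linarith [mul_nonneg hs (mul_add_mul_sq_nonneg_of_abs_le hc (y i))]
  have hy' : ∑ i, (y i : R) = 0 := by exact_mod_cast hy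
  calc ∑ i, x i ^ 2 = ∑ i, (x i ^ 2 + s * (x p + x q) * y i) := by
        rw [Finset.sum_add_distrib, ← Finset.mul_sum, hy', mul_zero, add_zero]
    _ ≤ ∑ i, (x i + s * y i) ^ 2 := Finset.sum_le_sum fun i _ => term_le i

end Spread

section DiscriminantGroup

variable {N n : ℕ}

theorem intVec_apply (k : Fin n → ℤ) (i : Fin n) : intVec k i = k i := rfl

theorem real_inner_eq_sum (x y : E n) : ⟪x, y⟫ = ∑ i, x i * y i := by
  simp only [PiLp.inner_apply, RCLike.inner_apply, conj_trivial, mul_comm]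

/-- The lattice `√N·A_{n-1}`, where `A_{n-1} = {y ∈ ℤⁿ : ∑ i, y i = 0}`. -/
def scaledRootLattice (N n : ℕ) : Submodule ℤ (E n) where
  carrier := {v | ∃ y : Fin n → ℤ, ∑ i, y i = 0 ∧ v = √N • intVec y}
  zero_mem' := ⟨0, by simp, by ext i; simp [intVec_apply]⟩
  add_mem' := by
    rintro _ _ ⟨y, hy, rfl⟩ ⟨w, hw, rfl⟩
    refine ⟨y + w, by simp [Finset.sum_add_distrib, hy, hw], ?_⟩
    ext i
    simp [intVec_apply, mul_add]
  smul_mem' := by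
    rintro c _ ⟨y, hy, rfl⟩
    refine ⟨c • y, by simp [← Finset.mul_sum, hy], ?_⟩
    ext i
    simp [intVec_apply, mul_left_comm]

theorem Λ3_eq_scaledRootLattice : Λ3 = scaledRootLattice 2 4 := by
  refine Eq.trans (congrArg _ (Set.ext fun v => ?_)) (Submodule.span_eq (scaledRootLattice 2 4))
  change _ ↔ ∃ y : Fin 4 → ℤ, ∑ i, y i = 0 ∧ v = √(2 : ℕ) • intVec y
  simp only [Set.mem_ofPred_eq, Fin.sum_univ_four, Nat.cast_ofNat]

theorem cosetMinNormIn_mk {x : dualLatticeIn (scaledRootLattice N n)}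
    (hx : ∀ i j, (x : E n) i - (x : E n) j ≤ √N) :
    CosetMinNormIn (scaledRootLattice N n) (Submodule.Quotient.mk x) (‖(x : E n)‖ ^ 2) := by
  refine ⟨⟨x, rfl, rfl⟩, ?_⟩
  rintro _ ⟨w, hw, rfl⟩
  obtain ⟨y, hy, hwx⟩ : (w - x : E n) ∈ scaledRootLattice N n :=
    (Submodule.Quotient.eq (M := dualLatticeIn (scaledRootLattice N n)) _).1 hw
  rw [sub_eq_iff_eq_add'.1 hwx, EuclideanSpace.real_norm_sq_eq, EuclideanSpace.real_norm_sq_eq]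
  exact sum_sq_le_sum_sq_add_mul hx hy

/-- The vector `1/√N` times the orthogonal projection of `k ∈ ℤⁿ` to the hyperplane
`∑ i, x i = 0`. These vectors form the dual of `√N·A_{n-1}`. -/
def dualVector (N n : ℕ) : (Fin n → ℤ) →ₗ[ℤ] E n where
  toFun k := vec fun i => (k i - (∑ j, k j) / n) / √N
  map_add' k l := by
    ext i
    simp only [vec, Pi.add_apply, Int.cast_add, Int.cast_sum, Finset.sum_add_distrib,
      WithLp.equiv_symm_apply, PiLp.add_apply]
    ring
  map_smul' c k := by
    ext i
    simp only [vec, Pi.smul_apply, zsmul_eq_mul, Int.cast_mul, Int.cast_sum, Int.cast_eq,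
      eq_intCast, ← Finset.mul_sum, WithLp.equiv_symm_apply, PiLp.smul_apply]
    ring

theorem dualVector_apply (k : Fin n → ℤ) (i : Fin n) :
    dualVector N n k i = (k i - (∑ j, k j) / n) / √N := by
  simp [dualVector, vec]

/-- The coordinates of `n√N` times `dualVector N n k`, reduced modulo `nN`. They determine the
coset of `dualVector N n k` modulo `√N·A_{n-1}`. -/
def residue (N n : ℕ) : (Fin n → ℤ) →ₗ[ℤ] (Fin n → ZMod (n * N)) where
  toFun k i := (n * k i - ∑ j, k j : ℤ)
  map_add' k l := by
    ext i
    simp only [Pi.add_apply, Finset.sum_add_distrib]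
    push_cast
    ring
  map_smul' c k := by
    ext i
    simp only [Pi.smul_apply, zsmul_eq_mul, ← Finset.mul_sum, eq_intCast, Int.cast_eq]
    push_cast
    ring

theorem residue_apply_eq_zero_iff (k : Fin n → ℤ) (i : Fin n) :
    residue N n k i = 0 ↔ (n * N : ℤ) ∣ n * k i - ∑ j, k j := by
  rw [← Nat.cast_mul]
  exact ZMod.intCast_zmod_eq_zero_iff_dvd _ _

theorem residue_add_const (k : Fin n → ℤ) (c : ℤ) :
    residue N n (fun i => k i + c) = residue N n k := by
  ext i
  simp only [residue, LinearMap.coe_mk, AddHom.coe_mk, Finset.sum_add_distrib, Finset.sum_const,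
    Finset.card_univ, Fintype.card_fin, nsmul_eq_mul]
  push_cast
  ring

theorem residue_smul_eq_zero {y : Fin n → ℤ} (hy : ∑ i, y i = 0) :
    residue N n ((N : ℤ) • y) = 0 := by
  ext i
  refine (residue_apply_eq_zero_iff _ i).2 ⟨y i, ?_⟩
  simp [← Finset.mul_sum, hy, mul_assoc]

theorem sum_dualVector [NeZero n] (k : Fin n → ℤ) : ∑ i, dualVector N n k i = 0 := by
  have hn : (n : ℝ) ≠ 0 := NeZero.ne _
  simp only [dualVector_apply, ← Finset.sum_div, Finset.sum_sub_distrib, Finset.sum_const,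
    Finset.card_univ, Fintype.card_fin, nsmul_eq_mul]
  field_simp
  simp

theorem sqrt_natCast_ne_zero [NeZero N] : √(N : ℝ) ≠ 0 :=
  Real.sqrt_ne_zero'.2 (Nat.cast_pos.2 (NeZero.pos N))

theorem inner_dualVector_sqrt_smul_intVec [NeZero N] (k : Fin n → ℤ) {y : Fin n → ℤ}
    (hy : ∑ i, y i = 0) : ⟪dualVector N n k, √N • intVec y⟫ = (∑ i, k i * y i : ℤ) := by
  have hN := sqrt_natCast_ne_zero (N := N)
  have hy' : ∑ i, (y i : ℝ) = 0 := by exact_mod_cast hy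
  calc ⟪dualVector N n k, √N • intVec y⟫
      = ∑ i, ((k i * y i : ℝ) - (∑ j, k j) / n * y i) := by
        rw [real_inner_eq_sum]
        refine Finset.sum_congr rfl fun i _ => ?_
        rw [dualVector_apply, PiLp.smul_apply, intVec_apply, smul_eq_mul]
        field_simp
    _ = (∑ i, k i * y i : ℤ) := by
        rw [Finset.sum_sub_distrib, ← Finset.mul_sum, hy']
        simp

variable [NeZero N] [NeZero n]

theorem exists_dualVector_eq {x : E n} (hx : x ∈ dualLatticeIn (scaledRootLattice N n)) :
    ∃ k, dualVector N n k = x := by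
  obtain ⟨hsum, hint⟩ := hx
  have hdiff (i : Fin n) : ∃ k : ℤ, √N * (x i - x 0) = k := by
    obtain ⟨k, hk⟩ := hint (√N • intVec (Pi.single i 1 - Pi.single 0 1)) ⟨_, by simp, rfl⟩
    refine ⟨k, ?_⟩
    rw [← hk, real_inner_smul_right, real_inner_eq_sum]
    simp [intVec_apply, mul_sub, Pi.single_apply]
  choose k hk using hdiff
  have hn : (n : ℝ) ≠ 0 := NeZero.ne _
  have hN := sqrt_natCast_ne_zero (N := N)
  have hk_sum : ((∑ i, k i : ℤ) : ℝ) / n = -(√N * x 0) := by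
    push_cast
    simp only [← hk, ← Finset.mul_sum, Finset.sum_sub_distrib, hsum, Finset.sum_const,
      Finset.card_univ, Fintype.card_fin, nsmul_eq_mul, zero_sub]
    field_simp
  refine ⟨k, PiLp.ext fun i => ?_⟩
  rw [dualVector_apply, hk_sum, ← hk]
  field_simp
  ring

theorem dualLatticeIn_scaledRootLattice :
    dualLatticeIn (scaledRootLattice N n) = LinearMap.range (dualVector N n) := by
  refine le_antisymm (fun x hx => exists_dualVector_eq hx) ?_
  rintro _ ⟨k, rfl⟩
  refine ⟨sum_dualVector k, ?_⟩
  rintro _ ⟨y, hy, rfl⟩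
  exact ⟨_, inner_dualVector_sqrt_smul_intVec k hy⟩

theorem dualVector_mem_scaledRootLattice_iff {k : Fin n → ℤ} :
    dualVector N n k ∈ scaledRootLattice N n ↔ residue N n k = 0 := by
  have hn : (n : ℝ) ≠ 0 := NeZero.ne _
  have hN := sqrt_natCast_ne_zero (N := N)
  have hcoord (i : Fin n) (y : ℤ) :
      dualVector N n k i = √N * y ↔ n * k i - ∑ j, k j = n * N * y := by
    rw [dualVector_apply, div_eq_iff hN, mul_right_comm, Real.mul_self_sqrt (Nat.cast_nonneg N),
      ← @Int.cast_inj ℝ]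
    push_cast
    field_simp
  have hmem : dualVector N n k ∈ scaledRootLattice N n ↔
      ∃ y : Fin n → ℤ, ∑ i, y i = 0 ∧ ∀ i, n * k i - ∑ j, k j = n * N * y i := by
    simp only [← hcoord]
    exact exists_congr fun y => and_congr_right fun _ => PiLp.ext_iff
  rw [hmem, funext_iff]
  simp only [residue_apply_eq_zero_iff, Pi.zero_apply]
  refine ⟨fun ⟨y, _, hy⟩ i => ⟨y i, hy i⟩, fun h => ?_⟩
  choose y hy using h
  refine ⟨y, ?_, hy⟩
  have hnN : (n * N : ℤ) ≠ 0 := mul_ne_zero (NeZero.ne _) (NeZero.ne _)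
  refine (mul_eq_zero.1 ?_).resolve_left hnN
  rw [Finset.mul_sum, ← Finset.sum_congr rfl fun i _ => hy i]
  simp [Finset.mul_sum]

/-- The integer `nN ‖dualVector N n k‖²`. -/
def scaledNormSq (k : Fin n → ℤ) : ℤ := n * ∑ i, k i ^ 2 - (∑ i, k i) ^ 2

theorem norm_sq_dualVector (k : Fin n → ℤ) :
    ‖dualVector N n k‖ ^ 2 = scaledNormSq k / (n * N) := by
  have hn : (n : ℝ) ≠ 0 := NeZero.ne _
  have hN : (N : ℝ) ≠ 0 := NeZero.ne _
  simp only [scaledNormSq, EuclideanSpace.real_norm_sq_eq, dualVector_apply, div_pow,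
    Real.sq_sqrt (Nat.cast_nonneg N), ← Finset.sum_div, sub_sq, Finset.sum_add_distrib,
    Finset.sum_sub_distrib, ← Finset.sum_mul, ← Finset.mul_sum, Finset.sum_const,
    Finset.card_univ, Fintype.card_fin, nsmul_eq_mul]
  push_cast
  field_simp
  ring

/-- The coset of `dualVector N n k` in the discriminant group of `√N·A_{n-1}`. -/
def dualClass (N n : ℕ) [NeZero N] [NeZero n] :
    (Fin n → ℤ) →ₗ[ℤ] DualQuotIn (scaledRootLattice N n) :=
  Submodule.mkQ _ ∘ₗ (dualVector N n).codRestrict _ fun k =>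
    dualLatticeIn_scaledRootLattice.ge ⟨k, rfl⟩

theorem dualClass_surjective : Function.Surjective (dualClass N n) := by
  refine (Submodule.mkQ_surjective _).comp ?_
  rintro ⟨x, hx⟩
  obtain ⟨k, rfl⟩ := exists_dualVector_eq hx
  exact ⟨k, rfl⟩

theorem dualClass_eq_zero_iff {k : Fin n → ℤ} : dualClass N n k = 0 ↔ residue N n k = 0 :=
  (Submodule.Quotient.mk_eq_zero _).trans dualVector_mem_scaledRootLattice_iff

theorem dualClass_eq_iff {k l : Fin n → ℤ} :
    dualClass N n k = dualClass N n l ↔ residue N n k = residue N n l := by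
  rw [← sub_eq_zero, ← map_sub, dualClass_eq_zero_iff, map_sub, sub_eq_zero]

theorem ker_dualClass : LinearMap.ker (dualClass N n) = LinearMap.ker (residue N n) :=
  Submodule.ext fun _ => dualClass_eq_zero_iff

/-- The discriminant group of `√N·A_{n-1}` as a subgroup of `(ℤ/nN)ⁿ`, through `residue`. -/
def discriminantEquiv (N n : ℕ) [NeZero N] [NeZero n] :
    DualQuotIn (scaledRootLattice N n) ≃ₗ[ℤ] LinearMap.range (residue N n) :=
  ((dualClass N n).quotKerEquivOfSurjective dualClass_surjective).symm ≪≫ₗ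
    Submodule.quotEquivOfEq _ _ ker_dualClass ≪≫ₗ
    (residue N n).quotKerEquivRange

theorem coe_discriminantEquiv_dualClass (k : Fin n → ℤ) :
    (discriminantEquiv N n (dualClass N n k) : Fin n → ZMod (n * N)) = residue N n k := by
  have h : ((dualClass N n).quotKerEquivOfSurjective dualClass_surjective).symm
      (dualClass N n k) = Submodule.Quotient.mk k := by
    rw [LinearEquiv.symm_apply_eq, LinearMap.quotKerEquivOfSurjective_apply_mk]
  simp only [discriminantEquiv, LinearEquiv.trans_apply, h, Submodule.quotEquivOfEq_mk,
    LinearMap.quotKerEquivRange_apply_mk]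

theorem addOrderOf_dualClass (k : Fin n → ℤ) :
    addOrderOf (dualClass N n k) = addOrderOf (residue N n k) := by
  rw [← coe_discriminantEquiv_dualClass]
  exact (addOrderOf_injective
    ((LinearMap.range (residue N n)).subtype ∘ₗ (discriminantEquiv N n).toLinearMap).toAddMonoidHom
    (Subtype.val_injective.comp (discriminantEquiv N n).injective) _).symm

theorem cosetMinNormIn_dualClass {k : Fin n → ℤ} (hk : ∀ i j, k i - k j ≤ N) :
    CosetMinNormIn (scaledRootLattice N n) (dualClass N n k)
      (scaledNormSq k / (n * N)) := by
  rw [← norm_sq_dualVector]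
  refine cosetMinNormIn_mk fun i j => ?_
  have hij : (k i - k j : ℝ) ≤ N := by exact_mod_cast hk i j
  calc dualVector N n k i - dualVector N n k j = (k i - k j) / √N := by
        rw [dualVector_apply, dualVector_apply]
        ring
    _ ≤ N / √N := by gcongr
    _ = √N := Real.div_sqrt

/-- The elements of `{0, …, N}ⁿ` as integer vectors. -/
def boxVector (κ : Fin n → Fin (N + 1)) : Fin n → ℤ := fun i => κ i

theorem exists_residue_boxVector_eq (k : Fin n → ℤ) :
    ∃ κ : Fin n → Fin (N + 1), residue N n (boxVector κ) = residue N n k := by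
  obtain ⟨y, hy, hspread⟩ := exists_sum_eq_zero_and_sub_le (Nat.cast_pos.2 (NeZero.pos N)) k
  set l := k + (N : ℤ) • y
  obtain ⟨p, hp⟩ := Finite.exists_min l
  refine ⟨fun i => ⟨(l i - l p).toNat, by have := hspread i p; omega⟩, ?_⟩
  calc residue N n (boxVector _) = residue N n (fun i => l i + -l p) := by
        congr 1
        ext i
        have := hp i
        simp only [boxVector]
        omega
    _ = residue N n l := residue_add_const l _
    _ = residue N n k := by rw [map_add, residue_smul_eq_zero hy, add_zero]

theorem exists_dualClass_boxVector_eq (c : DualQuotIn (scaledRootLattice N n)) :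
    ∃ κ : Fin n → Fin (N + 1), dualClass N n (boxVector κ) = c := by
  obtain ⟨k, rfl⟩ := dualClass_surjective c
  obtain ⟨κ, hκ⟩ := exists_residue_boxVector_eq (N := N) k
  exact ⟨κ, dualClass_eq_iff.2 hκ⟩

theorem cosetMinNormIn_dualClass_boxVector_iff (κ : Fin n → Fin (N + 1)) {m : ℝ} {M : ℤ}
    (hm : m = M / (n * N)) :
    CosetMinNormIn (scaledRootLattice N n) (dualClass N n (boxVector κ)) m ↔
      scaledNormSq (boxVector κ) = M := by
  have hnN : (n * N : ℝ) ≠ 0 := mul_ne_zero (NeZero.ne _) (NeZero.ne _)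
  have hmin : CosetMinNormIn (scaledRootLattice N n) (dualClass N n (boxVector κ))
      (scaledNormSq (boxVector κ) / (n * N)) :=
    cosetMinNormIn_dualClass fun i j => by
      simp only [boxVector]
      omega
  constructor
  · intro h
    have := hm.symm.trans (h.unique hmin)
    exact_mod_cast ((div_left_inj' hnN).1 this).symm
  · rintro rfl
    exact hm ▸ hmin

theorem ncard_setOf_eq_card_image_residue (p : DualQuotIn (scaledRootLattice N n) → Prop)
    (q : (Fin n → Fin (N + 1)) → Prop) [DecidablePred q]
    (hpq : ∀ κ, p (dualClass N n (boxVector κ)) ↔ q κ) :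
    {c | p c}.ncard =
      (({κ | q κ} : Finset _).image fun κ => residue N n (boxVector κ)).card := by
  rw [← Set.ncard_image_of_injective _
    (Subtype.val_injective.comp (discriminantEquiv N n).injective), ← Set.ncard_coe_finset]
  congr 1
  ext r
  simp only [Set.mem_image, Set.mem_ofPred_eq, Finset.coe_image, Finset.mem_univ,
    true_and, Finset.coe_filter, Function.comp_apply, ← hpq]
  constructor
  · rintro ⟨c, hc, rfl⟩
    obtain ⟨κ, rfl⟩ := exists_dualClass_boxVector_eq c
    exact ⟨κ, hc, (coe_discriminantEquiv_dualClass _).symm⟩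
  · rintro ⟨κ, hκ, rfl⟩
    exact ⟨_, hκ, coe_discriminantEquiv_dualClass _⟩

theorem ncard_cosetMinNormIn_addOrderOf {m : ℝ} (M : ℤ) (o : ℕ) [NeZero o]
    (hm : m = M / (n * N)) :
    {c : DualQuotIn (scaledRootLattice N n) |
      CosetMinNormIn (scaledRootLattice N n) c m ∧ addOrderOf c = o}.ncard =
    (({κ | scaledNormSq (boxVector κ) = M ∧ addOrderOf (residue N n (boxVector κ)) = o} :
      Finset (Fin n → Fin (N + 1))).image fun κ => residue N n (boxVector κ)).card :=
  ncard_setOf_eq_card_image_residue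
    (fun c => CosetMinNormIn (scaledRootLattice N n) c m ∧ addOrderOf c = o) _ fun κ => by
      rw [cosetMinNormIn_dualClass_boxVector_iff κ hm, addOrderOf_dualClass]

theorem natCard_dualQuotIn :
    Nat.card (DualQuotIn (scaledRootLattice N n)) =
      (Finset.univ.image fun κ : Fin n → Fin (N + 1) => residue N n (boxVector κ)).card := by
  rw [← Set.ncard_univ, ← Set.ofPred_true]
  simpa using ncard_setOf_eq_card_image_residue (N := N) (n := n) (fun _ => True) (fun _ => True)
    fun _ => Iff.rfl

end DiscriminantGroup

theorem scaledNormSq_and_addOrderOf_residue (κ : Fin 4 → Fin 3) :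
    residue 2 4 (boxVector κ) = 0 ∨
      (scaledNormSq (boxVector κ) = 3 ∧ addOrderOf (residue 2 4 (boxVector κ)) = 8) ∨
      (scaledNormSq (boxVector κ) = 4 ∧ addOrderOf (residue 2 4 (boxVector κ)) = 4) ∨
      (scaledNormSq (boxVector κ) = 8 ∧ addOrderOf (residue 2 4 (boxVector κ)) = 2) ∨
      (scaledNormSq (boxVector κ) = 11 ∧ addOrderOf (residue 2 4 (boxVector κ)) = 8) ∨
      (scaledNormSq (boxVector κ) = 12 ∧ addOrderOf (residue 2 4 (boxVector κ)) = 4) ∨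
      (scaledNormSq (boxVector κ) = 16 ∧ addOrderOf (residue 2 4 (boxVector κ)) = 2) := by
  revert κ
  decide +kernel

/-- The quotient `Λ₃♯/Λ₃` has exactly 32 elements: the zero coset, 8 cosets of minimal
norm 3/8 and order 8, 6 cosets of minimal norm 1/2 and order 4, 6 cosets of minimal
norm 1 and order 2, 8 cosets of minimal norm 11/8 and order 8, 2 cosets of minimal
norm 3/2 and order 4, and 1 coset of minimal norm 2 and order 2. -/
theorem Λ3_dual_quotient_classes :
    Nat.card (DualQuotIn Λ3) = 32 ∧
    (∀ c : DualQuotIn Λ3, c = 0 ∨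
      (CosetMinNormIn Λ3 c (3/8) ∧ addOrderOf c = 8) ∨
      (CosetMinNormIn Λ3 c (1/2) ∧ addOrderOf c = 4) ∨
      (CosetMinNormIn Λ3 c 1 ∧ addOrderOf c = 2) ∨
      (CosetMinNormIn Λ3 c (11/8) ∧ addOrderOf c = 8) ∨
      (CosetMinNormIn Λ3 c (3/2) ∧ addOrderOf c = 4) ∨
      (CosetMinNormIn Λ3 c 2 ∧ addOrderOf c = 2)) ∧
    {c : DualQuotIn Λ3 | CosetMinNormIn Λ3 c (3/8) ∧ addOrderOf c = 8}.ncard = 8 ∧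
    {c : DualQuotIn Λ3 | CosetMinNormIn Λ3 c (1/2) ∧ addOrderOf c = 4}.ncard = 6 ∧
    {c : DualQuotIn Λ3 | CosetMinNormIn Λ3 c 1 ∧ addOrderOf c = 2}.ncard = 6 ∧
    {c : DualQuotIn Λ3 | CosetMinNormIn Λ3 c (11/8) ∧ addOrderOf c = 8}.ncard = 8 ∧
    {c : DualQuotIn Λ3 | CosetMinNormIn Λ3 c (3/2) ∧ addOrderOf c = 4}.ncard = 2 ∧
    {c : DualQuotIn Λ3 | CosetMinNormIn Λ3 c 2 ∧ addOrderOf c = 2}.ncard = 1 := by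
  rw [Λ3_eq_scaledRootLattice]
  refine ⟨natCard_dualQuotIn.trans (by decide +kernel), fun c => ?_,
    (ncard_cosetMinNormIn_addOrderOf 3 8 (by norm_num)).trans (by decide +kernel),
    (ncard_cosetMinNormIn_addOrderOf 4 4 (by norm_num)).trans (by decide +kernel),
    (ncard_cosetMinNormIn_addOrderOf 8 2 (by norm_num)).trans (by decide +kernel),
    (ncard_cosetMinNormIn_addOrderOf 11 8 (by norm_num)).trans (by decide +kernel),
    (ncard_cosetMinNormIn_addOrderOf 12 4 (by norm_num)).trans (by decide +kernel),
    (ncard_cosetMinNormIn_addOrderOf 16 2 (by norm_num)).trans (by decide +kernel)⟩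
  obtain ⟨κ, rfl⟩ := exists_dualClass_boxVector_eq c
  have hnorm (m : ℝ) (M : ℤ) (hm : m = M / ((4 : ℕ) * (2 : ℕ))) :=
    cosetMinNormIn_dualClass_boxVector_iff κ hm
  rw [hnorm _ 3 (by norm_num), hnorm _ 4 (by norm_num), hnorm _ 8 (by norm_num),
    hnorm _ 11 (by norm_num), hnorm _ 12 (by norm_num), hnorm _ 16 (by norm_num),
    addOrderOf_dualClass, dualClass_eq_zero_iff]
  exact scaledNormSq_and_addOrderOf_residue κ
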